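/- Let f = X^24 - 24X^22 + 8X^21 + 252X^20 - 168X^19 - 1484X^18 - 627X^17 + 26628X^16 - 97918X^15 + 199671X^14 - 266679X^13 + 234997X^12 - 114681X^11 - 10107X^10 + 63686X^9 - 45384X^8 + 6819X^7 + 12880X^6 - 12096X^5 + 5502X^4 - 1504X^3 + 252X^2 - 24X + 1 and g = X^24 + (3852443469645611961262219752967766016/384257037754753807138505851908147025)(X^2 + 1), both in Q[X], and let L be the splitting field of f·g over Q. Then L contains a unique subfield of degree 2 over Q, namely Q(√(7 · 1437417619559484462138047)). -/

import Mathlib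

open Polynomial

/-- The degree-`24` polynomial `f` with Galois group `(C3 ≀ S8)^°`. -/
noncomputable def fRubik : ℚ[X] :=
  X ^ 24 - 24 * X ^ 22 + 8 * X ^ 21 + 252 * X ^ 20 - 168 * X ^ 19 - 1484 * X ^ 18
    - 627 * X ^ 17 + 26628 * X ^ 16 - 97918 * X ^ 15 + 199671 * X ^ 14
    - 266679 * X ^ 13 + 234997 * X ^ 12 - 114681 * X ^ 11 - 10107 * X ^ 10
    + 63686 * X ^ 9 - 45384 * X ^ 8 + 6819 * X ^ 7 + 12880 * X ^ 6 - 12096 * X ^ 5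
    + 5502 * X ^ 4 - 1504 * X ^ 3 + 252 * X ^ 2 - 24 * X + 1

/-- The polynomial `g = X^24 + (3852443469645611961262219752967766016 /
384257037754753807138505851908147025) (X^2 + 1)`. -/
noncomputable def gRubik : ℚ[X] :=
  X ^ 24 +
    C ((3852443469645611961262219752967766016 : ℚ) /
      384257037754753807138505851908147025) * (X ^ 2 + 1)

/-!
A quadratic subfield of `L` is the fixed field of a subgroup `N` of index two in the Galois group,
and such an `N` contains every square. The map `x ↦ (x³ - 3x + 1) / (x² - x)` sends the roots of
`f` to those of a trinomial of degree eight, and the squares of the roots of `g` are, up to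
scaling, the roots of a trinomial of degree twelve; both discriminants are
`7 · 1437417619559484462138047` times a square.

Frobenius elements at `97`, `233` and `439` show that the Galois group permutes each set of
trinomial roots by the full symmetric group, that squares of its elements act nontrivially on
either set while fixing the other, and that some square fixes all roots of both trinomials and
negates exactly two of the twelve pairs of opposite roots of `g`. Since nontrivial normal subgroups
of symmetric groups contain the alternating group, an automorphism `s` fixing the square root of
the discriminant can be multiplied by elements of `N` until it fixes the roots of both trinomials.
The product of the square roots of the roots of the second trinomial is rational, so the signs
which `s` still changes are even in number and are removed by conjugates of that last square. What
remains fixes the roots of `g` and moves those of `f` within the orbits of `x ↦ 1 / (1 - x)`, so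
its cube is `1`; hence it is a square and lies in `N`. Thus `s ∈ N`, and the fixed field of `N` is
generated by the square root of the discriminant.
-/

/-! ## Polynomial arithmetic on coefficient lists -/

section CoeffList

variable {R : Type*} [CommRing R]

/-- The polynomial whose coefficients, from the constant term upwards, are listed. The list
operations below compute with such polynomials modulo a monic polynomial `ofCoeffs (q ++ [1])`,
so that congruences between explicit polynomials over `ZMod p` can be checked by evaluation. -/
noncomputable def ofCoeffs : List R → R[X]
  | [] => 0
  | a :: l => C a + X * ofCoeffs l

/-- Addition of polynomials given by coefficient lists. -/
def addCoeffs : List R → List R → List R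
  | [], m => m
  | l, [] => l
  | a :: l, b :: m => (a + b) :: addCoeffs l m

/-- Multiplication by `X` modulo `ofCoeffs (q ++ [1])`, for a multiplicand of length at most
`q.length`; longer multiplicands are shifted but not reduced. -/
def shiftMod (q l : List R) : List R :=
  match (0 :: l).drop q.length with
  | [c] => addCoeffs ((0 :: l).take q.length) (q.map (-c * ·))
  | _ => 0 :: l

/-- Multiplication modulo `ofCoeffs (q ++ [1])`, by Horner's rule in the second factor. -/
def mulMod (q l : List R) : List R → List R
  | [] => []
  | a :: m => addCoeffs (l.map (a * ·)) (shiftMod q (mulMod q l m))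

/-- The `n`-th power modulo `ofCoeffs (q ++ [1])`, correct for `n < 2 ^ k`: the recursion is
on the number `k` of binary digits, to be structural. -/
def powModAux (q l : List R) : ℕ → ℕ → List R
  | 0, _ => [1]
  | k + 1, n =>
    let s := powModAux q l k (n / 2)
    if n % 2 = 0 then mulMod q s s else mulMod q l (mulMod q s s)

/-- The `n`-th power modulo `ofCoeffs (q ++ [1])`, by repeated squaring. -/
def powMod (q l : List R) (n : ℕ) : List R :=
  powModAux q l (n.log2 + 1) n

theorem ofCoeffs_addCoeffs (l m : List R) :
    ofCoeffs (addCoeffs l m) = ofCoeffs l + ofCoeffs m := by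
  fun_induction addCoeffs l m with
  | case1 => simp [ofCoeffs]
  | case2 => simp [ofCoeffs]
  | case3 a l b m ih =>
    simp only [ofCoeffs, ih, C_add]
    ring

theorem ofCoeffs_map_mul (c : R) (l : List R) :
    ofCoeffs (l.map (c * ·)) = C c * ofCoeffs l := by
  induction l with
  | nil => simp [ofCoeffs]
  | cons a l ih =>
    simp only [List.map_cons, ofCoeffs, ih, C_mul]
    ring

theorem ofCoeffs_append (l m : List R) :
    ofCoeffs (l ++ m) = ofCoeffs l + X ^ l.length * ofCoeffs m := by
  induction l with
  | nil => simp [ofCoeffs]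
  | cons a l ih =>
    simp only [List.cons_append, ofCoeffs, ih, List.length_cons]
    ring

theorem ofCoeffs_replicate_zero (n : ℕ) : ofCoeffs (List.replicate n (0 : R)) = 0 := by
  induction n with
  | zero => rfl
  | succ n ih => simp [List.replicate_succ, ofCoeffs, ih]

theorem coeff_ofCoeffs (l : List R) (i : ℕ) : (ofCoeffs l).coeff i = l.getD i 0 := by
  induction l generalizing i with
  | nil => simp [ofCoeffs]
  | cons a l ih => cases i <;> simp [ofCoeffs, ih, coeff_C_succ]

theorem ofCoeffs_eq_zero_iff (l : List R) : ofCoeffs l = 0 ↔ ∀ a ∈ l, a = 0 := by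
  simp only [Polynomial.ext_iff, coeff_ofCoeffs, coeff_zero, List.mem_iff_getElem]
  constructor
  · rintro h _ ⟨i, hi, rfl⟩
    simpa [hi] using h i
  · intro h i
    by_cases hi : i < l.length
    · simpa [hi] using h _ ⟨i, hi, rfl⟩
    · simp [not_lt.mp hi]

theorem degree_ofCoeffs_lt (l : List R) : (ofCoeffs l).degree < l.length := by
  refine (degree_lt_iff_coeff_zero _ _).mpr fun i hi => ?_
  rw [coeff_ofCoeffs, List.getD_eq_default _ _ hi]

variable {A : Type*} [CommRing A] [Algebra R A] {q : List R} {x : A}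

theorem aeval_shiftMod (hx : aeval x (ofCoeffs (q ++ [1])) = 0) (l : List R) :
    aeval x (ofCoeffs (shiftMod q l)) = x * aeval x (ofCoeffs l) := by
  have hl : x * aeval x (ofCoeffs l) = aeval x (ofCoeffs (0 :: l)) := by simp [ofCoeffs]
  rw [hl, shiftMod]
  split
  · next c hc =>
    have hlen : ((0 :: l).take q.length).length = q.length :=
      List.length_take_of_le (by have := congrArg List.length hc; simp at this ⊢; omega)
    have hq : x ^ q.length = -aeval x (ofCoeffs q) := by
      rw [eq_neg_iff_add_eq_zero, ← hx, ofCoeffs_append, add_comm]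
      simp [ofCoeffs]
    conv_rhs => rw [← List.take_append_drop q.length (0 :: l), hc, ofCoeffs_append, hlen]
    simp only [ofCoeffs_addCoeffs, ofCoeffs_map_mul, ofCoeffs, map_add, map_mul, map_pow, aeval_X,
      aeval_C, hq, map_neg, mul_zero, add_zero]
    ring
  · rfl

theorem aeval_mulMod (hx : aeval x (ofCoeffs (q ++ [1])) = 0) (l m : List R) :
    aeval x (ofCoeffs (mulMod q l m)) = aeval x (ofCoeffs l) * aeval x (ofCoeffs m) := by
  induction m with
  | nil => simp [mulMod, ofCoeffs]
  | cons a m ih =>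
    simp only [mulMod, ofCoeffs_addCoeffs, ofCoeffs_map_mul, ofCoeffs, map_add, map_mul, aeval_C,
      aeval_X, aeval_shiftMod hx, ih]
    ring

theorem aeval_powModAux (hx : aeval x (ofCoeffs (q ++ [1])) = 0) (l : List R) {k n : ℕ}
    (hn : n < 2 ^ k) : aeval x (ofCoeffs (powModAux q l k n)) = aeval x (ofCoeffs l) ^ n := by
  induction k generalizing n with
  | zero => simp [powModAux, ofCoeffs, Nat.lt_one_iff.mp hn]
  | succ k ih =>
    have hhalf := ih (n := n / 2) (by omega)
    simp only [powModAux]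
    split
    · next h =>
      rw [aeval_mulMod hx, hhalf, ← pow_add]
      congr 1
      omega
    · next h =>
      rw [aeval_mulMod hx, aeval_mulMod hx, hhalf, ← pow_add, ← pow_succ']
      congr 1
      omega

theorem aeval_powMod (hx : aeval x (ofCoeffs (q ++ [1])) = 0) (l : List R) (n : ℕ) :
    aeval x (ofCoeffs (powMod q l n)) = aeval x (ofCoeffs l) ^ n :=
  aeval_powModAux hx l Nat.lt_log2_self

end CoeffList

/-! ## Linear trinomials and their discriminants -/

section LinearTrinomial

section Ring

variable {R : Type*} [CommRing R]

/-- The trinomial `X ^ (m + 2) + b X + e`. -/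
noncomputable def linearTrinomial (m : ℕ) (b e : R) : R[X] :=
  X ^ (m + 2) + C b * X + C e

/-- The coefficients of `linearTrinomial m b e` below the leading one. -/
def linearTrinomialTail (m : ℕ) (b e : R) : List R :=
  e :: b :: List.replicate m 0

/-- The discriminant of `linearTrinomial m b e`; see `det_vandermonde_sq_eq_disc`. -/
def linearTrinomialDisc (m : ℕ) (b e : R) : R :=
  (-1) ^ ((m + 2) * (m + 1) / 2) *
    ((m + 2) ^ (m + 2) * e ^ (m + 1) + (-1) ^ (m + 1) * (m + 1) ^ (m + 1) * b ^ (m + 2))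

theorem ofCoeffs_linearTrinomialTail (m : ℕ) (b e : R) :
    ofCoeffs (linearTrinomialTail m b e ++ [1]) = linearTrinomial m b e := by
  simp only [linearTrinomialTail, List.cons_append, ofCoeffs, ofCoeffs_append,
    ofCoeffs_replicate_zero, List.length_replicate, linearTrinomial, C_1]
  ring

theorem map_linearTrinomial {S : Type*} [CommRing S] (f : R →+* S) (m : ℕ) (b e : R) :
    (linearTrinomial m b e).map f = linearTrinomial m (f b) (f e) := by
  simp [linearTrinomial]

theorem map_linearTrinomialDisc {S : Type*} [CommRing S] (f : R →+* S) (m : ℕ) (b e : R) :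
    f (linearTrinomialDisc m b e) = linearTrinomialDisc m (f b) (f e) := by
  simp [linearTrinomialDisc, map_ofNat]

theorem eval_linearTrinomial (m : ℕ) (b e x : R) :
    (linearTrinomial m b e).eval x = x ^ (m + 2) + b * x + e := by
  simp [linearTrinomial]

theorem aeval_linearTrinomial {A : Type*} [CommRing A] [Algebra R A] (m : ℕ) (b e : R) (x : A) :
    aeval x (linearTrinomial m b e) = x ^ (m + 2) + algebraMap R A b * x + algebraMap R A e := by
  simp [linearTrinomial]

theorem degree_linear_lt (m : ℕ) (b e : R) : (C b * X + C e).degree < ((m + 2 : ℕ) : WithBot ℕ) :=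
  degree_linear_le.trans_lt (by exact_mod_cast (by omega : 1 < m + 2))

theorem linearTrinomial_monic (m : ℕ) (b e : R) : (linearTrinomial m b e).Monic := by
  rw [linearTrinomial, add_assoc]
  exact monic_X_pow_add (degree_linear_lt m b e)

theorem natDegree_linearTrinomial [Nontrivial R] (m : ℕ) (b e : R) :
    (linearTrinomial m b e).natDegree = m + 2 := by
  rw [linearTrinomial, add_assoc, natDegree_add_eq_left_of_degree_lt, natDegree_X_pow]
  simpa only [degree_X_pow] using degree_linear_lt m b e

theorem det_vandermonde_sq {n : ℕ} (t : Fin n → R) :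
    (Matrix.vandermonde t).det ^ 2 =
      (-1) ^ (n * (n - 1) / 2) * ∏ i, (derivative (∏ j, (X - C (t j)))).eval (t i) := by
  have hder (i : Fin n) : (derivative (∏ j, (X - C (t j)))).eval (t i) =
      ∏ j ∈ {i}ᶜ, (t i - t j) := by
    have h := Lagrange.eval_nodal_derivative_eval_node_eq (v := t) (Finset.mem_univ i)
    rw [Lagrange.eval_nodal] at h
    rwa [Finset.compl_singleton]
  have hsum : ∑ i : Fin n, (Finset.Ioi i).card = n * (n - 1) / 2 := by
    simp only [Fin.card_Ioi]
    rw [Fin.sum_univ_eq_sum_range (n - 1 - ·), Finset.sum_range_reflect (fun i => i),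
      Finset.sum_range_id]
  simp_rw [hder]
  rw [← Finset.prod_prod_Ioi_mul_eq_prod_prod_off_diag (fun i j => t j - t i),
    Matrix.det_vandermonde, ← hsum, ← Finset.prod_pow_eq_pow_sum, ← Finset.prod_mul_distrib,
    ← Finset.prod_pow]
  refine Finset.prod_congr rfl fun i _ => ?_
  rw [← Finset.prod_const, ← Finset.prod_mul_distrib, ← Finset.prod_pow]
  exact Finset.prod_congr rfl fun j _ => by ring

theorem det_vandermonde_comp_perm {n : ℕ} (t : Fin n → R) (π : Equiv.Perm (Fin n)) :
    (Matrix.vandermonde (t ∘ π)).det =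
      (Equiv.Perm.sign π : ℤ) * (Matrix.vandermonde t).det := by
  rw [← Matrix.det_permute]
  rfl

end Ring

section Field

variable {K : Type*} [Field K] {m : ℕ} {b e : K} {t : Fin (m + 2) → K}

theorem prod_sub_mul_of_linearTrinomial_eq_prod
    (h : linearTrinomial m b e = ∏ i, (X - C (t i))) (u v : K) :
    ∏ i, (u - v * t i) = u ^ (m + 2) + b * u * v ^ (m + 1) + e * v ^ (m + 2) := by
  rcases eq_or_ne v 0 with rfl | hv
  · simp
  have hfactor (i : Fin (m + 2)) : u - v * t i = v * (u / v - t i) := by field_simp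
  have heval : ∏ i, (u / v - t i) = (u / v) ^ (m + 2) + b * (u / v) + e := by
    rw [← eval_linearTrinomial, h]
    simp [eval_prod]
  simp only [hfactor, Finset.prod_mul_distrib, heval, Finset.prod_const, Finset.card_univ,
    Fintype.card_fin]
  rw [div_pow, mul_add, mul_add, mul_div_cancel₀ _ (pow_ne_zero _ hv), pow_succ v (m + 1)]
  field_simp

theorem prod_eval_derivative_of_linearTrinomial_eq_prod
    (h : linearTrinomial m b e = ∏ i, (X - C (t i))) (he : e ≠ 0) :
    ∏ i, (derivative (∏ j, (X - C (t j)))).eval (t i) =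
      (m + 2) ^ (m + 2) * e ^ (m + 1) + (-1) ^ (m + 1) * (m + 1) ^ (m + 1) * b ^ (m + 2) := by
  have hroot (i : Fin (m + 2)) : t i ^ (m + 2) + b * t i + e = 0 := by
    rw [← eval_linearTrinomial, h, eval_prod]
    exact Finset.prod_eq_zero (Finset.mem_univ i) (by simp)
  have he' : ∏ i, -t i = e := by
    simpa using prod_sub_mul_of_linearTrinomial_eq_prod h 0 1
  have hlinear (i : Fin (m + 2)) : -t i * (derivative (∏ j, (X - C (t j)))).eval (t i) =
      (m + 2) * e - -1 * ((m + 1) * b) * t i := by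
    rw [← h]
    simp only [linearTrinomial, derivative_add, derivative_X_pow, derivative_C_mul, derivative_X,
      derivative_C, eval_add, eval_mul, eval_C, eval_pow, eval_X, eval_one, eval_zero,
      Nat.add_one_sub_one, Nat.cast_add, Nat.cast_ofNat]
    linear_combination (-(m + 2 : K)) * hroot i
  refine mul_left_cancel₀ he ?_
  nth_rw 1 [← he']
  rw [← Finset.prod_mul_distrib, Finset.prod_congr rfl fun i _ => hlinear i,
    prod_sub_mul_of_linearTrinomial_eq_prod h]
  simp only [mul_pow]
  ring

theorem det_vandermonde_sq_eq_disc
    (h : linearTrinomial m b e = ∏ i, (X - C (t i))) (he : e ≠ 0) :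
    (Matrix.vandermonde t).det ^ 2 = linearTrinomialDisc m b e := by
  rw [det_vandermonde_sq, prod_eval_derivative_of_linearTrinomial_eq_prod h he]
  rfl

end Field

end LinearTrinomial

/-! ## Permutation groups -/

section PermutationGroups

open Equiv

variable {α β : Type*}

theorem isMultiplyPretransitive_two_of_isCycle {H : Subgroup (Perm α)} {c e : Perm α} {z : α}
    (hc : c.IsCycle) (hcH : c ∈ H) (hz : ∀ x, c x = x ↔ x = z) (heH : e ∈ H) (he : e z ≠ z) :
    MulAction.IsMultiplyPretransitive H α 2 := by
  have hstab {x y : α} (hx : x ≠ z) (hy : y ≠ z) : ∃ g ∈ H, g z = z ∧ g x = y := by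
    obtain ⟨i, hi⟩ := hc.exists_zpow_eq (mt (hz x).mp hx) (mt (hz y).mp hy)
    exact ⟨c ^ i, H.zpow_mem hcH i, Perm.zpow_apply_eq_self_of_apply_eq_self ((hz z).mpr rfl) i, hi⟩
  have htrans (x : α) : ∃ g ∈ H, g x = z := by
    rcases eq_or_ne x z with rfl | hx
    · exact ⟨1, H.one_mem, rfl⟩
    · have hez : e⁻¹ z ≠ z := fun h => he (Perm.inv_eq_iff_eq.mp h).symm
      obtain ⟨g, hg, -, hgx⟩ := hstab hx hez
      exact ⟨e * g, H.mul_mem heH hg, by simp [hgx]⟩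
  refine MulAction.is_two_pretransitive_iff.mpr fun {a b a' b'} hab hab' => ?_
  obtain ⟨g, hg, hga⟩ := htrans a
  obtain ⟨g', hg', hga'⟩ := htrans a'
  obtain ⟨k, hk, hkz, hkb⟩ := hstab (x := g b) (y := g' b') (hga ▸ g.injective.ne hab.symm)
    (hga' ▸ g'.injective.ne hab'.symm)
  refine ⟨⟨g'⁻¹ * k * g, H.mul_mem (H.mul_mem (H.inv_mem hg') hk) hg⟩, ?_, ?_⟩
  · simp [Subgroup.smul_def, hga, hkz, Equiv.symm_apply_eq, hga']
  · simp [Subgroup.smul_def, hkb]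

theorem isCycle_of_pow_prime_eq_one [Fintype α] {π : Perm α} {d : ℕ} (hd : d.Prime)
    (hcard : Fintype.card α = d + 1) (hπ : π ^ d = 1)
    (hfix : ∀ x y, π x = x → π y = y → x = y) :
    π.IsCycle ∧ ∃ z, ∀ x, π x = x ↔ x = z := by
  classical
  have hne : π ≠ 1 := by
    rintro rfl
    have := Fintype.card_le_one_iff.mpr fun x y => hfix x y rfl rfl
    have := hd.pos
    omega
  have horder : orderOf π = d := orderOf_eq_prime hπ hne (hp := ⟨hd⟩)
  have hcycle : π.IsCycle := Perm.isCycle_of_prime_order (horder ▸ hd) (by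
    have := Finset.card_le_univ π.support
    have := hd.one_lt
    omega)
  obtain ⟨z, hz⟩ : ∃ z, π z = z := by
    by_contra! h
    have hsupp : π.support = Finset.univ := by ext x; simp [h x]
    have := hcycle.orderOf
    rw [hsupp, Finset.card_univ] at this
    omega
  exact ⟨hcycle, z, fun x => ⟨fun hx => hfix x z hx hz, fun hx => hx ▸ hz⟩⟩

variable [DecidableEq α] [DecidableEq β]

theorem eq_top_of_isCycle_of_isSwap_mem [Finite α] {H : Subgroup (Perm α)} {c e s : Perm α} {z : α}
    (hc : c.IsCycle) (hcH : c ∈ H) (hz : ∀ x, c x = x ↔ x = z) (heH : e ∈ H) (he : e z ≠ z)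
    (hs : s.IsSwap) (hsH : s ∈ H) : H = ⊤ :=
  Perm.subgroup_eq_top_of_isPreprimitive_of_isSwap_mem
    (MulAction.isPreprimitive_of_is_two_pretransitive
      (isMultiplyPretransitive_two_of_isCycle hc hcH hz heH he)) s hs hsH

variable {G : Type*} [Group G]

theorem surjective_of_isCycle_of_isSwap [Finite α] {ρ : G →* Perm α} {c e s : G}
    (hc : (ρ c).IsCycle) (hz : ∃ z, ∀ x, ρ c x = x ↔ x = z) (he : ∀ x, ρ e x ≠ x)
    (hs : (ρ s).IsSwap) : Function.Surjective ρ := by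
  obtain ⟨z, hz⟩ := hz
  exact MonoidHom.range_eq_top.mp (eq_top_of_isCycle_of_isSwap_mem hc ⟨c, rfl⟩ hz ⟨e, rfl⟩ (he z)
    hs ⟨s, rfl⟩)

theorem alternatingGroup_le_map_of_normal [Fintype α] (hα : 5 ≤ Nat.card α) {ρ : G →* Perm α}
    (hρ : Function.Surjective ρ) (N : Subgroup G) [N.Normal] {a : G} (ha : a ∈ N) (hρa : ρ a ≠ 1) :
    alternatingGroup α ≤ N.map ρ := by
  have : (N.map ρ).Normal := Subgroup.Normal.map inferInstance ρ hρ
  exact Perm.alternatingGroup_le_of_normal hα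
    ((Subgroup.nontrivial_iff_exists_ne_one _).mpr ⟨ρ a, Subgroup.mem_map_of_mem ρ ha, hρa⟩)

theorem exists_mul_mem_ker_of_sign_eq_one [Fintype α] [Fintype β] (hα : 5 ≤ Nat.card α)
    (hβ : 5 ≤ Nat.card β) {ρ : G →* Perm α} {τ : G →* Perm β} (hρ : Function.Surjective ρ)
    (hτ : Function.Surjective τ) (N : Subgroup G) [N.Normal] {a b : G} (haN : a ∈ N)
    (hτa : τ a = 1) (hρa : ρ a ≠ 1) (hbN : b ∈ N) (hρb : ρ b = 1) (hτb : τ b ≠ 1) {s : G}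
    (hρs : Perm.sign (ρ s) = 1) (hτs : Perm.sign (τ s) = 1) :
    ∃ w ∈ N, ρ (s * w) = 1 ∧ τ (s * w) = 1 := by
  have haN' : a ∈ N ⊓ τ.ker := ⟨haN, hτa⟩
  have hbN' : b ∈ N ⊓ ρ.ker := ⟨hbN, hρb⟩
  obtain ⟨v, ⟨hvN, hτv : τ v = 1⟩, hρv⟩ :=
    alternatingGroup_le_map_of_normal hα hρ _ haN' hρa (inv_mem (Perm.mem_alternatingGroup.mpr hρs))
  obtain ⟨w, ⟨hwN, hρw : ρ w = 1⟩, hτw⟩ :=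
    alternatingGroup_le_map_of_normal hβ hτ _ hbN' hτb (inv_mem (Perm.mem_alternatingGroup.mpr hτs))
  exact ⟨v * w, mul_mem hvN hwN, by simp [hρv, hρw], by simp [hτw, hτv]⟩

end PermutationGroups

/-! ## Frobenius acting on the roots of a trinomial -/

section FrobeniusOnRoots

open Equiv

variable {p : ℕ} {κ : Type*} [Field κ] {ι : Type*} {t : ι → κ} {π : Perm ι}

theorem pow_apply_eq_pow_prime_pow (hπ : ∀ i, t (π i) = t i ^ p) (k : ℕ) (i : ι) :
    t ((π ^ k) i) = t i ^ p ^ k := by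
  induction k with
  | zero => simp
  | succ k ih => rw [pow_succ', Perm.mul_apply, hπ, ih, ← pow_mul, ← pow_succ]

variable [Fact p.Prime] [Algebra (ZMod p) κ] {m : ℕ} {b e : ZMod p}

/-- The coefficients of `X ^ p ^ k - X` modulo `ofCoeffs (q ++ [1])`. -/
def frobeniusSubX (q : List (ZMod p)) (k : ℕ) : List (ZMod p) :=
  addCoeffs (powMod q [0, 1] (p ^ k)) [0, -1]

theorem pow_eq_aeval_powMod {x : κ} (hx : aeval x (linearTrinomial m b e) = 0) (n : ℕ) :
    x ^ n = aeval x (ofCoeffs (powMod (linearTrinomialTail m b e) [0, 1] n)) := by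
  rw [← ofCoeffs_linearTrinomialTail] at hx
  rw [aeval_powMod hx]
  simp [ofCoeffs]

theorem aeval_frobeniusSubX {x : κ} (hx : aeval x (linearTrinomial m b e) = 0) (k : ℕ) :
    aeval x (ofCoeffs (frobeniusSubX (linearTrinomialTail m b e) k)) = x ^ p ^ k - x := by
  rw [frobeniusSubX, ofCoeffs_addCoeffs, map_add, ← pow_eq_aeval_powMod hx]
  simp [ofCoeffs, sub_eq_add_neg]

theorem exists_algebraMap_eq_of_pow_eq_self {x : κ} (hx : x ^ p = x) :
    ∃ u : ZMod p, algebraMap (ZMod p) κ u = x := by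
  have : CharP κ p := charP_of_injective_algebraMap (algebraMap (ZMod p) κ).injective p
  obtain ⟨n, rfl⟩ := (mem_bot_iff_intCast p κ).mp
    ((Subfield.mem_bot_iff_pow_eq_self κ p).mpr hx)
  exact ⟨n, map_intCast _ n⟩

variable (hπ : ∀ i, t (π i) = t i ^ p) (ht : ∀ i, aeval (t i) (linearTrinomial m b e) = 0)
include hπ ht

theorem exists_root_of_apply_eq_self {i : ι} (hi : π i = i) :
    ∃ u : ZMod p, u ^ (m + 2) + b * u + e = 0 ∧ algebraMap (ZMod p) κ u = t i := by
  obtain ⟨u, hu⟩ := exists_algebraMap_eq_of_pow_eq_self ((hπ i).symm.trans (congrArg t hi))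
  refine ⟨u, ?_, hu⟩
  rw [← eval_linearTrinomial]
  refine (algebraMap (ZMod p) κ).injective ?_
  rw [map_zero, ← ht i, ← hu, aeval_algebraMap_apply_eq_algebraMap_eval]

theorem apply_ne_self_of_forall_ne_zero (h : ∀ u : ZMod p, u ^ (m + 2) + b * u + e ≠ 0) (i : ι) :
    π i ≠ i := fun hi =>
  let ⟨u, hu, _⟩ := exists_root_of_apply_eq_self hπ ht hi
  h u hu

variable (hinj : Function.Injective t)
include hinj

theorem pow_eq_one_of_frobeniusSubX {k : ℕ}
    (hk : ∀ a ∈ frobeniusSubX (linearTrinomialTail m b e) k, a = 0) : π ^ k = 1 := by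
  ext i
  refine hinj ?_
  have h := aeval_frobeniusSubX (ht i) k
  rw [(ofCoeffs_eq_zero_iff _).mpr hk, map_zero] at h
  rw [pow_apply_eq_pow_prime_pow hπ, Perm.one_apply, sub_eq_zero.mp h.symm]

variable [Fintype ι]

theorem isCycle_of_frobeniusSubX {d : ℕ} (hd : d.Prime) (hcard : Fintype.card ι = d + 1)
    (hk : ∀ a ∈ frobeniusSubX (linearTrinomialTail m b e) d, a = 0)
    {c : ZMod p} (hc : ∀ u : ZMod p, u ^ (m + 2) + b * u + e = 0 → u = c) :
    π.IsCycle ∧ ∃ z, ∀ x, π x = x ↔ x = z := by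
  refine isCycle_of_pow_prime_eq_one hd hcard (pow_eq_one_of_frobeniusSubX hπ ht hinj hk)
    fun i j hi hj => hinj ?_
  obtain ⟨u, hu, hui⟩ := exists_root_of_apply_eq_self hπ ht hi
  obtain ⟨v, hv, hvj⟩ := exists_root_of_apply_eq_self hπ ht hj
  rw [← hui, ← hvj, hc u hu, hc v hv]

theorem pow_ne_one_of_frobeniusSubX {k : ℕ}
    (hlen : (frobeniusSubX (linearTrinomialTail m b e) k).length ≤ Fintype.card ι)
    (hne : ∃ a ∈ frobeniusSubX (linearTrinomialTail m b e) k, a ≠ 0) : π ^ k ≠ 1 := by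
  intro hone
  set D := frobeniusSubX (linearTrinomialTail m b e) k
  have hroot (i : ι) : ((ofCoeffs D).map (algebraMap (ZMod p) κ)).eval (t i) = 0 := by
    rw [eval_map_algebraMap, aeval_frobeniusSubX (ht i), ← pow_apply_eq_pow_prime_pow hπ, hone,
      Perm.one_apply, sub_self]
  have hzero : (ofCoeffs D).map (algebraMap (ZMod p) κ) = 0 := by
    refine eq_zero_of_degree_lt_of_eval_index_eq_zero Finset.univ hinj.injOn ?_
      fun i _ => hroot i
    rw [degree_map, Finset.card_univ]
    exact (degree_ofCoeffs_lt D).trans_le (by exact_mod_cast hlen)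
  obtain ⟨a, ha, ha0⟩ := hne
  exact ha0 ((ofCoeffs_eq_zero_iff D).mp ((Polynomial.map_eq_zero _).mp hzero) a ha)

variable [DecidableEq ι]

theorem isSwap_of_frobeniusSubX {k : ℕ} {b' e' : ZMod p}
    (hlen : (frobeniusSubX (linearTrinomialTail m b e) k).length ≤ Fintype.card ι)
    (hne : ∃ a ∈ frobeniusSubX (linearTrinomialTail m b e) k, a ≠ 0)
    (hfactor : ∀ a ∈ mulMod (linearTrinomialTail m b e) (linearTrinomialTail 0 b' e' ++ [1])
      (frobeniusSubX (linearTrinomialTail m b e) k), a = 0) :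
    (π ^ k).IsSwap ∧ ∀ i, (π ^ k) i ≠ i → aeval (t i) (linearTrinomial 0 b' e') = 0 := by
  have hroot (i : ι) (hi : (π ^ k) i ≠ i) : aeval (t i) (linearTrinomial 0 b' e') = 0 := by
    have hti : aeval (t i) (ofCoeffs (linearTrinomialTail m b e ++ [1])) = 0 := by
      rw [ofCoeffs_linearTrinomialTail]
      exact ht i
    have h := aeval_mulMod hti (linearTrinomialTail 0 b' e' ++ [1])
      (frobeniusSubX (linearTrinomialTail m b e) k)
    rw [(ofCoeffs_eq_zero_iff _).mpr hfactor, map_zero, ofCoeffs_linearTrinomialTail,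
      aeval_frobeniusSubX (ht i), ← pow_apply_eq_pow_prime_pow hπ] at h
    exact (mul_eq_zero.mp h.symm).resolve_right (sub_ne_zero.mpr (hinj.ne hi))
  refine ⟨Perm.card_support_eq_two.mp (le_antisymm ?_ (Perm.two_le_card_support_of_ne_one
    (pow_ne_one_of_frobeniusSubX hπ ht hinj hlen hne))), hroot⟩
  classical
  have hQ := linearTrinomial_monic 0 b' e'
  calc (π ^ k).support.card
      = ((π ^ k).support.image t).card := (Finset.card_image_of_injective _ hinj).symm
    _ ≤ (((linearTrinomial 0 b' e').aroots κ).toFinset).card := by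
        refine Finset.card_le_card fun x hx => ?_
        obtain ⟨i, hi, rfl⟩ := Finset.mem_image.mp hx
        exact Multiset.mem_toFinset.mpr
          (mem_aroots.mpr ⟨hQ.ne_zero, hroot i (Perm.mem_support.mp hi)⟩)
    _ ≤ ((linearTrinomial 0 b' e').aroots κ).card := Multiset.toFinset_card_le _
    _ ≤ ((linearTrinomial 0 b' e').map (algebraMap (ZMod p) κ)).natDegree := card_roots' _
    _ = 2 := by rw [hQ.natDegree_map, natDegree_linearTrinomial]

end FrobeniusOnRoots

/-! ## Labelled roots in a number field -/

section NumberFieldRoots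

open NumberField

universe u

variable {L : Type u} [Field L]

theorem exists_frobenius [NumberField L] [IsGalois ℚ L] (p : ℕ) [hp : Fact p.Prime] :
    ∃ (σ : Gal(L/ℚ)) (κ : Type u) (_ : Field κ) (_ : Algebra (ZMod p) κ) (red : 𝓞 L →+* κ),
      ∀ x, red (σ • x) = red x ^ p := by
  let P : Ideal ℤ := Ideal.span {(p : ℤ)}
  have hP0 : P ≠ ⊥ := by simpa [P, Ideal.span_singleton_eq_bot] using hp.out.ne_zero
  have hPmax : P.IsMaximal := ((Ideal.span_singleton_prime (by exact_mod_cast hp.out.ne_zero)).mpr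
    (Nat.prime_iff_prime_int.mp hp.out)).isMaximal hP0
  obtain ⟨Q, hQ, hover⟩ := Ideal.exists_maximal_ideal_liesOver_of_isIntegral (S := 𝓞 L) P
  have : Finite (𝓞 L ⧸ Q) :=
    Ideal.finiteQuotientOfFreeOfNeBot Q (Ideal.ne_bot_of_liesOver_of_ne_bot hP0 Q)
  have : IsGaloisGroup Gal(L/ℚ) ℤ (𝓞 L) := IsGaloisGroup.of_isFractionRing Gal(L/ℚ) ℤ (𝓞 L) ℚ L
  obtain ⟨σ, hσ⟩ := IsArithFrobAt.exists_of_isInvariant ℤ Gal(L/ℚ) Q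
  have hcard : Nat.card (ℤ ⧸ Q.under ℤ) = p := by
    rw [← hover.over, Nat.card_congr (Int.quotientSpanEquivZMod p).toEquiv, Nat.card_zmod,
      Int.natAbs_natCast]
  have hpQ : ((p : ℕ) : 𝓞 L ⧸ Q) = 0 := by
    have hmem : algebraMap ℤ (𝓞 L) p ∈ Q := by
      rw [← Ideal.mem_comap, ← Ideal.under_def, ← hover.over]
      exact Ideal.mem_span_singleton_self _
    simpa using Ideal.Quotient.eq_zero_iff_mem.mpr hmem
  let : Field (𝓞 L ⧸ Q) := Ideal.Quotient.field Q
  have : CharP (𝓞 L ⧸ Q) p := (CharP.charP_iff_prime_eq_zero hp.out).mpr hpQ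
  refine ⟨σ, 𝓞 L ⧸ Q, inferInstance, ZMod.algebra _ p, Ideal.Quotient.mk Q, fun x => ?_⟩
  have h := AlgHom.IsArithFrobAt.mk_apply hσ x
  rwa [hcard] at h

theorem apply_pow_smul_eq_pow [CharZero L] {κ : Type*} [CommRing κ] {red : 𝓞 L →+* κ}
    {σ : Gal(L/ℚ)} {p : ℕ} (hred : ∀ x, red (σ • x) = red x ^ p) (k : ℕ) (x : 𝓞 L) :
    red (σ ^ k • x) = red x ^ p ^ k := by
  induction k with
  | zero => simp
  | succ k ih => rw [pow_succ', mul_smul, hred, ih, ← pow_mul, ← pow_succ]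

theorem pow_smul_eq_neg_of_pow_eq_neg_one [CharZero L] {p : ℕ} (hp : Odd p) {κ : Type*} [Field κ]
    (hchar : (2 : κ) ≠ 0) {red : 𝓞 L →+* κ} {σ : Gal(L/ℚ)} (hred : ∀ x, red (σ • x) = red x ^ p)
    {k : ℕ} {y : 𝓞 L} (hfix : σ ^ k • y ^ 2 = y ^ 2)
    (hneg : red (y ^ 2) ^ ((p ^ k - 1) / 2) = -1) : σ ^ k • y = -y := by
  rw [smul_pow'] at hfix
  refine (sq_eq_sq_iff_eq_or_eq_neg.mp hfix).resolve_left fun heq => ?_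
  have hpow : p ^ k = 2 * ((p ^ k - 1) / 2) + 1 := by
    have := Nat.odd_iff.mp (hp.pow (n := k))
    lia
  have hy : red y = -red y :=
    calc red y = red y ^ p ^ k := by rw [← apply_pow_smul_eq_pow hred, heq]
      _ = red (y ^ 2) ^ ((p ^ k - 1) / 2) * red y := by
        conv_lhs => rw [hpow, pow_succ, pow_mul, ← map_pow]
      _ = -red y := by rw [hneg, neg_one_mul]
  have hy0 : red y = 0 :=
    (mul_eq_zero.mp (by linear_combination hy : 2 * red y = 0)).resolve_left hchar
  rw [map_pow, hy0, zero_pow two_ne_zero, zero_pow_eq] at hneg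
  split_ifs at hneg
  · exact hchar (by linear_combination hneg)
  · exact one_ne_zero (neg_eq_zero.mp hneg.symm)

theorem exists_eq_prod_X_sub_C {K : Type*} [Field K] {P : K[X]} {n : ℕ} (hm : P.Monic)
    (hn : P.natDegree = n) (hs : P.Splits) : ∃ t : Fin n → K, P = ∏ i, (X - C (t i)) := by
  have hcard : P.roots.toList.length = n := by
    rw [Multiset.length_toList, ← hn, hs.natDegree_eq_card_roots]
  subst hcard
  refine ⟨P.roots.toList.get, ?_⟩
  conv_lhs => rw [hs.eq_prod_roots_of_monic hm, ← Multiset.coe_toList P.roots]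
  rw [Multiset.map_coe, Multiset.prod_coe, ← List.prod_ofFn]
  congr 1
  exact List.ext_getElem (by simp) (by simp)

variable (L) in
/-- An indexing, by `Fin n`, of the roots of an integral polynomial which splits into distinct
linear factors in the ring of integers of `L`. It turns the Galois action on the roots into
permutations of `Fin n`. -/
structure RootLabelling (P : ℤ[X]) (n : ℕ) where
  /-- The root with a given label. -/
  root : Fin n → 𝓞 L
  root_injective : Function.Injective root
  map_eq_prod : P.map (algebraMap ℤ (𝓞 L)) = ∏ i, (X - C (root i))

namespace RootLabelling

section General

variable {P : ℤ[X]} {n : ℕ} (R : RootLabelling L P n)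

theorem map_eq_prod_of_ringHom {A : Type*} [CommRing A] (f : 𝓞 L →+* A) :
    P.map (algebraMap ℤ A) = ∏ i, (X - C (f (R.root i))) := by
  have h := congrArg (Polynomial.map f) R.map_eq_prod
  rw [Polynomial.map_map, Subsingleton.elim (f.comp _) (algebraMap ℤ A)] at h
  simpa [Polynomial.map_prod] using h

theorem aeval_eq_prod {A : Type*} [CommRing A] (f : 𝓞 L →+* A) (x : A) :
    aeval x P = ∏ i, (x - f (R.root i)) := by
  rw [← eval_map_algebraMap, R.map_eq_prod_of_ringHom f, eval_prod]
  simp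

theorem aeval_root {A : Type*} [CommRing A] (f : 𝓞 L →+* A) (i : Fin n) :
    aeval (f (R.root i)) P = 0 := by
  rw [R.aeval_eq_prod f]
  exact Finset.prod_eq_zero (Finset.mem_univ i) (sub_self _)

theorem exists_coe_root_eq {x : L} (hx : aeval x P = 0) : ∃ i, (R.root i : L) = x := by
  rw [R.aeval_eq_prod (algebraMap (𝓞 L) L), Finset.prod_eq_zero_iff] at hx
  obtain ⟨i, -, hi⟩ := hx
  exact ⟨i, (sub_eq_zero.mp hi).symm⟩

variable [CharZero L]

theorem exists_root_eq_smul (s : Gal(L/ℚ)) (i : Fin n) : ∃ j, R.root j = s • R.root i := by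
  obtain ⟨j, hj⟩ := R.exists_coe_root_eq
    (R.aeval_root ((algebraMap (𝓞 L) L).comp (MulSemiringAction.toRingHom _ _ s)) i)
  exact ⟨j, RingOfIntegers.coe_injective hj⟩

/-- The permutation of the labels induced by the Galois action on the roots. -/
noncomputable def perm : Gal(L/ℚ) →* Equiv.Perm (Fin n) :=
  letI : MulAction Gal(L/ℚ) (Fin n) :=
    { smul := fun s i => (R.exists_root_eq_smul s i).choose
      one_smul := fun i => R.root_injective <|
        (R.exists_root_eq_smul 1 i).choose_spec.trans (one_smul _ _)
      mul_smul := fun s s' i => R.root_injective <|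
        calc R.root (R.exists_root_eq_smul (s * s') i).choose
            = s • s' • R.root i :=
              (R.exists_root_eq_smul (s * s') i).choose_spec.trans (mul_smul s s' _)
          _ = s • R.root (R.exists_root_eq_smul s' i).choose :=
              congrArg (s • ·) (R.exists_root_eq_smul s' i).choose_spec.symm
          _ = _ := (R.exists_root_eq_smul s _).choose_spec.symm }
  MulAction.toPermHom Gal(L/ℚ) (Fin n)

theorem root_perm (s : Gal(L/ℚ)) (i : Fin n) : R.root (R.perm s i) = s • R.root i :=
  (R.exists_root_eq_smul s i).choose_spec

theorem coe_root_perm (s : Gal(L/ℚ)) (i : Fin n) : (R.root (R.perm s i) : L) = s (R.root i : L) :=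
  congrArg _ (R.root_perm s i)

theorem red_root_perm {κ : Type*} [CommRing κ] {red : 𝓞 L →+* κ} {σ : Gal(L/ℚ)} {p : ℕ}
    (hred : ∀ x, red (σ • x) = red x ^ p) (i : Fin n) :
    red (R.root (R.perm σ i)) = red (R.root i) ^ p := by
  rw [R.root_perm, hred]

theorem map_det_vandermonde (s : Gal(L/ℚ)) :
    s (Matrix.vandermonde fun i => (R.root i : L)).det =
      (Equiv.Perm.sign (R.perm s) : ℤ) * (Matrix.vandermonde fun i => (R.root i : L)).det := by
  rw [← det_vandermonde_comp_perm, ← RingHom.coe_coe, RingHom.map_det]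
  congr 1
  ext i j
  simp [Matrix.vandermonde, R.coe_root_perm]

end General

section Trinomial

variable {m : ℕ} {b e : ℤ}

theorem nonempty_of_splits [CharZero L] (he : e ≠ 0) (hdisc : linearTrinomialDisc m b e ≠ 0)
    (hs : ((linearTrinomial m b e).map (algebraMap ℤ L)).Splits) :
    Nonempty (RootLabelling L (linearTrinomial m b e) (m + 2)) := by
  have hmonic := linearTrinomial_monic m b e
  obtain ⟨t, ht⟩ := exists_eq_prod_X_sub_C (hmonic.map _)
    ((hmonic.natDegree_map (algebraMap ℤ L)).trans (natDegree_linearTrinomial m b e)) hs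
  have hint (i : Fin (m + 2)) : IsIntegral ℤ (t i) := by
    refine ⟨_, hmonic, ?_⟩
    rw [← eval_map, ht, eval_prod]
    exact Finset.prod_eq_zero (Finset.mem_univ i) (by simp)
  have hdet : (Matrix.vandermonde t).det ^ 2 = algebraMap ℤ L (linearTrinomialDisc m b e) := by
    rw [map_linearTrinomial] at ht
    rw [map_linearTrinomialDisc]
    exact det_vandermonde_sq_eq_disc ht (by simpa using he)
  have hinj : Function.Injective t := by
    refine Matrix.det_vandermonde_ne_zero_iff.mp fun h => hdisc ?_
    simpa [h] using hdet.symm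
  choose T hT using fun i => (IsIntegralClosure.isIntegral_iff (A := 𝓞 L)).mp (hint i)
  obtain rfl : algebraMap (𝓞 L) L ∘ T = t := funext hT
  refine ⟨⟨T, hinj.of_comp, Polynomial.map_injective _ (RingOfIntegers.coe_injective (K := L)) ?_⟩⟩
  rw [Polynomial.map_map, Subsingleton.elim (RingHom.comp _ _) (algebraMap ℤ L), ht]
  simp [Polynomial.map_prod]

variable (R : RootLabelling L (linearTrinomial m b e) (m + 2))
include R

theorem det_vandermonde_sq {κ : Type*} [Field κ] (f : 𝓞 L →+* κ) (he : (e : κ) ≠ 0) :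
    (Matrix.vandermonde (f ∘ R.root)).det ^ 2 = linearTrinomialDisc m (b : κ) e := by
  have h := R.map_eq_prod_of_ringHom f
  rw [map_linearTrinomial] at h
  exact det_vandermonde_sq_eq_disc h he

theorem aeval_linearTrinomial_intCast (k : Type*) {A : Type*} [CommRing k] [CommRing A]
    [Algebra k A] (f : 𝓞 L →+* A) (i : Fin (m + 2)) :
    aeval (f (R.root i)) (linearTrinomial m (b : k) e) = 0 := by
  simpa [aeval_linearTrinomial] using R.aeval_root f i

theorem comp_root_injective {k κ : Type*} [Field k] [Field κ] [Algebra k κ] (f : 𝓞 L →+* κ)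
    (he : (e : k) ≠ 0) (hdisc : linearTrinomialDisc m (b : k) e ≠ 0) :
    Function.Injective (f ∘ R.root) := by
  rw [← (algebraMap k κ).injective.ne_iff, map_intCast, map_zero] at he
  rw [← (algebraMap k κ).injective.ne_iff, map_linearTrinomialDisc, map_intCast, map_intCast,
    map_zero, ← R.det_vandermonde_sq f he] at hdisc
  exact Matrix.det_vandermonde_ne_zero_iff.mp (ne_zero_pow two_ne_zero hdisc)

variable [CharZero L]

theorem det_vandermonde_sq_of_disc_eq {D c : ℤ} (he : e ≠ 0)
    (hdisc : linearTrinomialDisc m b e = D * c ^ 2) :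
    (Matrix.vandermonde fun i => (R.root i : L)).det ^ 2 = D * (c : L) ^ 2 := by
  rw [← Int.cast_pow, ← Int.cast_mul, ← hdisc, ← eq_intCast (Int.castRingHom L),
    map_linearTrinomialDisc]
  exact R.det_vandermonde_sq (algebraMap (𝓞 L) L) (by exact_mod_cast he)

theorem exists_sq_eq_of_disc_eq {D c : ℤ} (he : e ≠ 0) (hc : c ≠ 0)
    (hdisc : linearTrinomialDisc m b e = D * c ^ 2) : ∃ x : L, x ^ 2 = D := by
  have hc' : (c : L) ^ 2 ≠ 0 := pow_ne_zero 2 (by exact_mod_cast hc)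
  refine ⟨(Matrix.vandermonde fun i => (R.root i : L)).det / c, ?_⟩
  rw [div_pow, R.det_vandermonde_sq_of_disc_eq he hdisc, mul_div_cancel_right₀ _ hc']

theorem apply_of_sq_eq_of_disc_eq {D c : ℤ} (he : e ≠ 0) (hc : c ≠ 0)
    (hdisc : linearTrinomialDisc m b e = D * c ^ 2) {x : L} (hx : x ^ 2 = D) (s : Gal(L/ℚ)) :
    s x = (Equiv.Perm.sign (R.perm s) : ℤ) * x := by
  have hc' : (c : L) ≠ 0 := by exact_mod_cast hc
  have hs := R.map_det_vandermonde s
  have hsq := R.det_vandermonde_sq_of_disc_eq he hdisc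
  rw [← hx, ← mul_pow] at hsq
  refine mul_right_cancel₀ hc' ?_
  rcases sq_eq_sq_iff_eq_or_eq_neg.mp hsq with h | h <;>
    simp only [h, map_neg, map_mul, map_intCast] at hs
  · linear_combination hs
  · linear_combination -hs

theorem sign_perm_eq_one_of_apply_eq_self {D c : ℤ} (he : e ≠ 0) (hD : D ≠ 0) (hc : c ≠ 0)
    (hdisc : linearTrinomialDisc m b e = D * c ^ 2) {x : L} (hx : x ^ 2 = D) {s : Gal(L/ℚ)}
    (hs : s x = x) : Equiv.Perm.sign (R.perm s) = 1 := by
  have hx0 : x ≠ 0 := by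
    rintro rfl
    exact hD (by simpa using hx.symm)
  have h := R.apply_of_sq_eq_of_disc_eq he hc hdisc hx s
  rw [hs, eq_comm, mul_eq_right₀ hx0] at h
  exact Units.ext (Int.cast_injective (α := L) (by simpa using h))

end Trinomial

end RootLabelling

end NumberFieldRoots

/-! ## Sign changes of square roots -/

section SignChanges

theorem even_card_induction {ι : Type*} [DecidableEq ι] {p : Finset ι → Prop} (hempty : p ∅)
    (hpair : ∀ i j, i ≠ j → p {i, j}) (hsymm : ∀ A B, p A → p B → p (symmDiff A B))
    {A : Finset ι} (hA : Even A.card) : p A := by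
  induction A using Finset.strongInduction with
  | H A ih =>
    rcases Nat.eq_zero_or_pos A.card with h0 | hpos
    · exact Finset.card_eq_zero.mp h0 ▸ hempty
    · obtain ⟨i, hi, j, hj, hij⟩ := Finset.one_lt_card.mp (by grind : 1 < A.card)
      have hsub : {i, j} ⊆ A := by grind
      have hcard : (A \ {i, j}).card = A.card - 2 := by
        rw [Finset.card_sdiff_of_subset hsub, Finset.card_pair hij]
      have hdiff : p (A \ {i, j}) := ih _ (Finset.sdiff_ssubset hsub (by simp)) (by grind)
      have heq : symmDiff (A \ {i, j}) {i, j} = A := by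
        rw [disjoint_sdiff_self_left.symmDiff_eq_sup, sdiff_sup_cancel hsub]
      exact heq ▸ hsymm _ _ hdiff (hpair i j hij)

variable {F E : Type*} [Field F] [Field E] [Algebra F E]

theorem sq_apply_eq_self_of_apply_sq_eq {s : Gal(E/F)} {x : E} (h : s x ^ 2 = x ^ 2) :
    (s ^ 2) x = x := by
  rw [pow_two, AlgEquiv.mul_apply]
  rcases sq_eq_sq_iff_eq_or_eq_neg.mp h with h | h <;> simp [h]

variable {ι : Type*} [Fintype ι] [DecidableEq E]

/-- The labels of the members of the family `y` which `s` negates. -/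
def flips (y : ι → E) (s : Gal(E/F)) : Finset ι := {i | s (y i) = -y i}

variable {y : ι → E} {τ : Gal(E/F) →* Equiv.Perm ι}

theorem mem_flips {s : Gal(E/F)} {i : ι} : i ∈ flips y s ↔ s (y i) = -y i := by
  simp [flips]

variable (hy : ∀ i, y i ≠ 0) (hτ : ∀ s i, s (y i) ^ 2 = y (τ s i) ^ 2)

include hτ in
theorem flips_conj (g s : Gal(E/F)) :
    flips y (g * s * g⁻¹) = (flips y s).map (τ g).toEmbedding := by
  ext i
  have hneg : (g * s * g⁻¹) (y i) = -y i ↔ s (g⁻¹ (y i)) = -g⁻¹ (y i) := by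
    rw [← (g⁻¹).injective.eq_iff, ← AlgEquiv.mul_apply, ← mul_assoc, inv_mul_cancel_left, map_neg,
      AlgEquiv.mul_apply]
  rw [mem_flips, hneg, Finset.mem_map_equiv, ← Equiv.Perm.inv_def, ← map_inv, mem_flips]
  rcases sq_eq_sq_iff_eq_or_eq_neg.mp (hτ g⁻¹ i) with h | h
  · rw [h]
  · rw [h, map_neg, neg_inj]

include hτ in
theorem apply_eq_ite_flips [DecidableEq ι] {s : Gal(E/F)} (hs : τ s = 1) (i : ι) :
    s (y i) = if i ∈ flips y s then -y i else y i := by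
  split_ifs with h
  · exact mem_flips.mp h
  · have hsq : s (y i) ^ 2 = y i ^ 2 := by simpa [hs] using hτ s i
    exact (sq_eq_sq_iff_eq_or_eq_neg.mp hsq).resolve_right (mt mem_flips.mpr h)

variable [CharZero E]
include hy hτ

theorem flips_mul [DecidableEq ι] {s w : Gal(E/F)} (hs : τ s = 1) (hw : τ w = 1) :
    flips y (s * w) = symmDiff (flips y s) (flips y w) := by
  ext i
  have hne : y i ≠ -y i := fun h => hy i (self_eq_neg.mp h)
  rw [mem_flips, AlgEquiv.mul_apply, apply_eq_ite_flips hτ hw, Finset.mem_symmDiff]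
  by_cases his : i ∈ flips y s <;> by_cases hiw : i ∈ flips y w <;>
    simp [his, hiw, apply_eq_ite_flips hτ hs, hne]

theorem even_card_flips {s : Gal(E/F)} (hs : τ s = 1) (hprod : s (∏ i, y i) = ∏ i, y i) :
    Even (flips y s).card := by
  classical
  have h : (∏ i, y i) = (-1) ^ (flips y s).card * ∏ i, y i :=
    calc (∏ i, y i) = ∏ i, (if i ∈ flips y s then -1 else 1) * y i := by
          rw [← hprod, map_prod]
          simp only [apply_eq_ite_flips hτ hs, ite_mul, neg_one_mul, one_mul]
      _ = _ := by rw [Finset.prod_mul_distrib, Finset.prod_ite_mem]; simp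
  by_contra hodd
  rw [(Nat.not_even_iff_odd.mp hodd).neg_one_pow, neg_one_mul] at h
  exact Finset.prod_ne_zero_iff.mpr (fun i _ => hy i) (self_eq_neg.mp h)

variable (hsurj : Function.Surjective τ) {N : Subgroup Gal(E/F)} [N.Normal]
include hsurj

theorem exists_mem_flips_eq {v : Gal(E/F)} (hvN : v ∈ N) (hvτ : τ v = 1)
    (hv : (flips y v).card = 2) {A : Finset ι} (hA : Even A.card) :
    ∃ w ∈ N, τ w = 1 ∧ flips y w = A := by
  classical
  refine even_card_induction (p := fun A => ∃ w ∈ N, τ w = 1 ∧ flips y w = A) ?_ ?_ ?_ hA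
  · exact ⟨1, N.one_mem, map_one τ, by simp [flips, self_eq_neg, hy]⟩
  · intro i j hij
    obtain ⟨i₀, j₀, hij₀, hv⟩ := Finset.card_eq_two.mp hv
    obtain ⟨π, hi, hj⟩ := MulAction.is_two_pretransitive_iff.mp
      (Equiv.Perm.isMultiplyPretransitive ι 2) hij₀ hij
    obtain ⟨g, rfl⟩ := hsurj π
    refine ⟨g * v * g⁻¹, Subgroup.Normal.conj_mem inferInstance v hvN g, by simp [hvτ], ?_⟩
    rw [flips_conj hτ, hv, ← hi, ← hj]
    simp
  · rintro _ _ ⟨w, hwN, hwτ, rfl⟩ ⟨w', hwN', hwτ', rfl⟩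
    exact ⟨w * w', mul_mem hwN hwN', by simp [hwτ, hwτ'], flips_mul hy hτ hwτ hwτ'⟩

theorem exists_mul_apply_eq_self {v : Gal(E/F)} (hvN : v ∈ N) (hvτ : τ v = 1)
    (hv : (flips y v).card = 2) {s : Gal(E/F)} (hs : τ s = 1)
    (hprod : s (∏ i, y i) = ∏ i, y i) : ∃ w ∈ N, ∀ i, (s * w) (y i) = y i := by
  classical
  obtain ⟨w, hwN, hwτ, hw⟩ :=
    exists_mem_flips_eq hy hτ hsurj hvN hvτ hv (even_card_flips hy hτ hs hprod)
  refine ⟨w, hwN, fun i => ?_⟩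
  rw [apply_eq_ite_flips hτ (by simp [hs, hwτ]), flips_mul hy hτ hs hwτ, hw, symmDiff_self]
  simp

end SignChanges

/-! ## The Möbius transformation `x ↦ 1 / (1 - x)` -/

section Mobius

variable {E : Type*} [Field E]

/-- The Möbius transformation of order three permuting `0`, `1` and `∞`. -/
def mobius (x : E) : E := (1 - x)⁻¹

/-- The cubic quotient map for the group generated by `mobius`; the roots of `fRubik` are the
points it sends to the roots of a trinomial of degree eight. -/
def mobiusQuotient (x : E) : E := (x ^ 3 - 3 * x + 1) / (x ^ 2 - x)

theorem map_mobiusQuotient {E' G : Type*} [Field E'] [FunLike G E E'] [RingHomClass G E E'] (f : G)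
    (x : E) : f (mobiusQuotient x) = mobiusQuotient (f x) := by
  simp only [mobiusQuotient, map_div₀, map_add, map_sub, map_mul, map_pow, map_one, map_ofNat]

theorem sq_sub_self_ne_zero {x : E} (h0 : x ≠ 0) (h1 : x ≠ 1) : x ^ 2 - x ≠ 0 := by
  rw [show x ^ 2 - x = x * (x - 1) by ring]
  exact mul_ne_zero h0 (sub_ne_zero.mpr h1)

theorem mobius_mobius {x : E} (h0 : x ≠ 0) (h1 : x ≠ 1) : mobius (mobius x) = (x - 1) / x := by
  have h1' : 1 - x ≠ 0 := sub_ne_zero.mpr h1.symm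
  have : 1 - (1 - x)⁻¹ = -x / (1 - x) := by field_simp; ring
  rw [mobius, mobius, this, inv_div]
  field_simp
  ring

theorem isPeriodicPt_mobius {x : E} (h0 : x ≠ 0) (h1 : x ≠ 1) :
    Function.IsPeriodicPt mobius 3 x := by
  change mobius (mobius (mobius x)) = x
  have : 1 - (x - 1) / x = x⁻¹ := by field_simp; ring
  rw [mobius_mobius h0 h1, mobius, this, inv_inv]

theorem exists_iterate_mobius_eq {x z : E} (hx0 : x ≠ 0) (hx1 : x ≠ 1) (hz0 : z ≠ 0)
    (hz1 : z ≠ 1) (h : mobiusQuotient z = mobiusQuotient x) : ∃ k, mobius^[k] x = z := by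
  have hx1' : 1 - x ≠ 0 := sub_ne_zero.mpr hx1.symm
  rw [mobiusQuotient, mobiusQuotient,
    div_eq_div_iff (sq_sub_self_ne_zero hz0 hz1) (sq_sub_self_ne_zero hx0 hx1)] at h
  have hfactor : (z - x) * (((1 - x) * z - 1) * (x * z - (x - 1))) = 0 := by
    linear_combination -h
  rcases mul_eq_zero.mp hfactor with h | h
  · exact ⟨0, (sub_eq_zero.mp h).symm⟩
  · rcases mul_eq_zero.mp h with h | h
    · exact ⟨1, (eq_inv_of_mul_eq_one_right (sub_eq_zero.mp h)).symm⟩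
    · exact ⟨2, (mobius_mobius hx0 hx1).trans
        (eq_div_of_mul_eq hx0 ((mul_comm z x).trans (sub_eq_zero.mp h))).symm⟩

theorem exists_mobiusQuotient_eq [IsAlgClosed E] (t : E) :
    ∃ x, x ≠ 0 ∧ x ≠ 1 ∧ mobiusQuotient x = t := by
  have hdeg : (X ^ 3 - C t * X ^ 2 + C (t - 3) * X + 1).degree = 3 := by compute_degree!
  obtain ⟨x, hx⟩ := IsAlgClosed.exists_root _ (hdeg.trans_ne (by decide))
  have hx : x ^ 3 - t * x ^ 2 + (t - 3) * x + 1 = 0 := by simpa [IsRoot] using hx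
  have h0 : x ≠ 0 := by
    rintro rfl
    simp at hx
  have h1 : x ≠ 1 := by
    rintro rfl
    exact one_ne_zero (by linear_combination -hx)
  refine ⟨x, h0, h1, (div_eq_iff (sq_sub_self_ne_zero h0 h1)).mpr ?_⟩
  linear_combination hx

theorem pow_three_apply_eq_self {F : Type*} [Field F] [Algebra F E] {u : Gal(E/F)} {x : E}
    (h0 : x ≠ 0) (h1 : x ≠ 1) (hu : u (mobiusQuotient x) = mobiusQuotient x) : (u ^ 3) x = x := by
  have hcomm : Function.Commute u mobius := fun z => by simp [mobius]
  obtain ⟨k, hk⟩ : ∃ k, mobius^[k] x = u x :=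
    exists_iterate_mobius_eq h0 h1 (by simpa) (by simpa) ((map_mobiusQuotient u x).symm.trans hu)
  have hiter (z : E) : u (mobius^[k] z) = mobius^[k] (u z) := hcomm.iterate_right k z
  calc (u ^ 3) x = u (u (u x)) := rfl
    _ = mobius^[k] (mobius^[k] (mobius^[k] x)) := by simp only [← hk, hiter]
    _ = (mobius^[k])^[3] x := rfl
    _ = mobius^[3 * k] x := by rw [← Function.iterate_mul, mul_comm]
    _ = x := (isPeriodicPt_mobius h0 h1).mul_const k

end Mobius

/-! ## The trinomials behind the two polynomials -/

section Trinomials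

/-- The square root of the numerator of the coefficient of `gRubik`. -/
def gNumSqrt : ℤ := 1962764241992810496

/-- The square root of the denominator of the coefficient of `gRubik`. -/
def gDenSqrt : ℤ := 619884697145165705

/-- The discriminants of both trinomials are this number up to squares. -/
def rubikDisc : ℤ := 7 * 1437417619559484462138047

/-- The trinomial whose roots are the images under `mobiusQuotient` of the roots of `fRubik`. -/
noncomputable abbrev fTrinomial : ℤ[X] := linearTrinomial 6 (-2139) 6489

/-- The trinomial whose roots are the squares of the roots of `gRubik`, scaled to be integral. -/
noncomputable abbrev gTrinomial : ℤ[X] :=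
  linearTrinomial 10 (gNumSqrt ^ 2 * gDenSqrt ^ 20) (gNumSqrt ^ 2 * gDenSqrt ^ 22)

theorem linearTrinomialDisc_f : linearTrinomialDisc 6 (-2139) 6489 = rubikDisc * 27783 ^ 2 := by
  decide +kernel

theorem linearTrinomialDisc_g :
    linearTrinomialDisc 10 (gNumSqrt ^ 2 * gDenSqrt ^ 20) (gNumSqrt ^ 2 * gDenSqrt ^ 22) =
      rubikDisc * (gNumSqrt ^ 11 * gDenSqrt ^ 120 * 480895709184) ^ 2 := by
  decide +kernel

variable {E : Type*} [Field E] [Algebra ℚ E]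

theorem aeval_fRubik (x : E) :
    aeval x fRubik = (x ^ 3 - 3 * x + 1) ^ 8 - 2139 * (x ^ 3 - 3 * x + 1) * (x ^ 2 - x) ^ 7
      + 6489 * (x ^ 2 - x) ^ 8 := by
  simp only [fRubik, map_add, map_sub, map_mul, map_pow, map_ofNat, aeval_X, map_one]
  ring

theorem aeval_fRubik_eq_mul {x : E} (h0 : x ≠ 0) (h1 : x ≠ 1) :
    aeval x fRubik = (x ^ 2 - x) ^ 8 * aeval (mobiusQuotient x) fTrinomial := by
  have hd := sq_sub_self_ne_zero h0 h1
  rw [aeval_fRubik, aeval_linearTrinomial, mobiusQuotient]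
  simp only [eq_intCast]
  push_cast
  generalize x ^ 2 - x = d at *
  field_simp
  ring

theorem aeval_gRubik (x : E) :
    (gDenSqrt : E) ^ 24 * aeval x gRubik = aeval ((gDenSqrt * x) ^ 2) gTrinomial := by
  have : CharZero E := algebraRat.charZero E
  have hden : (gDenSqrt : E) ≠ 0 := by norm_num [gDenSqrt]
  have hcoeff : (3852443469645611961262219752967766016 / 384257037754753807138505851908147025 : E)
      = gNumSqrt ^ 2 / gDenSqrt ^ 2 := by norm_num [gNumSqrt, gDenSqrt]
  simp only [gRubik, aeval_linearTrinomial, map_add, map_mul, map_pow, aeval_X, map_one, aeval_C,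
    map_div₀, map_ofNat, hcoeff, eq_intCast]
  push_cast
  field_simp
  ring

theorem fRubik_ne_zero : fRubik ≠ 0 := fun h => by
  simpa [h] using aeval_fRubik (0 : ℚ)

theorem gRubik_ne_zero : gRubik ≠ 0 := fun h => by
  have := aeval_gRubik (0 : ℚ)
  norm_num [h, aeval_linearTrinomial, gNumSqrt, gDenSqrt] at this

theorem ne_zero_of_aeval_fRubik {x : E} (hx : aeval x fRubik = 0) : x ≠ 0 := by
  rintro rfl
  norm_num [aeval_fRubik] at hx

theorem ne_one_of_aeval_fRubik {x : E} (hx : aeval x fRubik = 0) : x ≠ 1 := by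
  rintro rfl
  norm_num [aeval_fRubik] at hx

theorem aeval_mobiusQuotient_fTrinomial {x : E} (hx : aeval x fRubik = 0) :
    aeval (mobiusQuotient x) fTrinomial = 0 := by
  have h0 := ne_zero_of_aeval_fRubik hx
  have h1 := ne_one_of_aeval_fRubik hx
  rw [aeval_fRubik_eq_mul h0 h1] at hx
  exact (mul_eq_zero.mp hx).resolve_left (pow_ne_zero 8 (sq_sub_self_ne_zero h0 h1))

theorem exists_algebraMap_eq_of_aeval_eq_zero {k K A : Type*} [Field k] [Field K] [Field A]
    [Algebra k K] [Algebra K A] [Algebra k A] [IsScalarTower k K A] {P : k[X]} (hP : P ≠ 0)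
    (hs : (P.map (algebraMap k K)).Splits) {x : A} (hx : aeval x P = 0) :
    ∃ z : K, algebraMap K A z = x := by
  refine hs.mem_range_of_isRoot (by simpa using hP) ?_
  rw [Polynomial.map_map, ← IsScalarTower.algebraMap_eq, IsRoot, eval_map_algebraMap, hx]

theorem splits_map_of_forall_aeval_eq_zero {K A : Type*} [Field K] [Field A] [IsAlgClosed A]
    [Algebra K A] {P : ℤ[X]} (h : ∀ t : A, aeval t P = 0 → ∃ z : K, algebraMap K A z = t) :
    (P.map (algebraMap ℤ K)).Splits := by
  refine Splits.of_splits_map (algebraMap K A) (IsAlgClosed.splits _) fun t ht => h t ?_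
  rw [Polynomial.map_map, Subsingleton.elim (RingHom.comp _ _) (algebraMap ℤ A)] at ht
  simpa only [IsRoot, eval_map_algebraMap] using isRoot_of_mem_roots ht

variable {L : Type*} [Field L] [Algebra ℚ L]

theorem fTrinomial_splits (hs : (fRubik.map (algebraMap ℚ L)).Splits) :
    (fTrinomial.map (algebraMap ℤ L)).Splits := by
  refine splits_map_of_forall_aeval_eq_zero (A := AlgebraicClosure L) fun t ht => ?_
  obtain ⟨x, h0, h1, rfl⟩ := exists_mobiusQuotient_eq t
  have hx : aeval x fRubik = 0 := by rw [aeval_fRubik_eq_mul h0 h1, ht, mul_zero]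
  obtain ⟨z, rfl⟩ := exists_algebraMap_eq_of_aeval_eq_zero fRubik_ne_zero hs hx
  exact ⟨mobiusQuotient z, map_mobiusQuotient _ z⟩

theorem exists_algebraMap_sq_eq_of_gTrinomial {A : Type*} [Field A] [IsAlgClosed A] [Algebra L A]
    [Algebra ℚ A] [IsScalarTower ℚ L A] (hs : (gRubik.map (algebraMap ℚ L)).Splits) {z : A}
    (hz : aeval z gTrinomial = 0) : ∃ y : L, algebraMap L A (y ^ 2) = z := by
  have : CharZero A := algebraRat.charZero A
  have hden : (gDenSqrt : A) ≠ 0 := by norm_num [gDenSqrt]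
  obtain ⟨x, rfl⟩ := IsAlgClosed.exists_pow_nat_eq z (n := 2) two_pos
  have hx : aeval (x / gDenSqrt) gRubik = 0 := by
    have h := aeval_gRubik (x / gDenSqrt)
    rw [mul_div_cancel₀ _ hden, hz] at h
    exact (mul_eq_zero.mp h).resolve_left (pow_ne_zero 24 hden)
  obtain ⟨y, hy⟩ := exists_algebraMap_eq_of_aeval_eq_zero gRubik_ne_zero hs hx
  exact ⟨gDenSqrt * y, by rw [map_pow, map_mul, hy, map_intCast, mul_div_cancel₀ _ hden]⟩

theorem gTrinomial_splits (hs : (gRubik.map (algebraMap ℚ L)).Splits) :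
    (gTrinomial.map (algebraMap ℤ L)).Splits := by
  refine splits_map_of_forall_aeval_eq_zero (A := AlgebraicClosure L) fun t ht => ?_
  obtain ⟨y, hy⟩ := exists_algebraMap_sq_eq_of_gTrinomial hs ht
  exact ⟨y ^ 2, hy⟩

theorem exists_sq_eq_of_gTrinomial (hs : (gRubik.map (algebraMap ℚ L)).Splits) {z : L}
    (hz : aeval z gTrinomial = 0) : ∃ y : L, y ^ 2 = z := by
  obtain ⟨y, hy⟩ := exists_algebraMap_sq_eq_of_gTrinomial (A := AlgebraicClosure L) hs
    (z := algebraMap L _ z) (by rw [aeval_algebraMap_apply, hz, map_zero])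
  exact ⟨y, (algebraMap L (AlgebraicClosure L)).injective hy⟩

end Trinomials

/-! ## Frobenius elements at 97, 233 and 439 -/

section FrobeniusElements

open NumberField

instance : Fact (Nat.Prime 97) := ⟨by norm_num⟩

instance : Fact (Nat.Prime 233) := ⟨by norm_num⟩

instance : Fact (Nat.Prime 439) := ⟨by norm_num⟩

variable {L : Type*} [Field L] [NumberField L] [IsGalois ℚ L]
variable (R : RootLabelling L fTrinomial 8) (S : RootLabelling L gTrinomial 12)

theorem exists_perm_apply_ne_self :
    ∃ σ : Gal(L/ℚ), (∀ i, R.perm σ i ≠ i) ∧ ∀ i, S.perm σ i ≠ i := by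
  obtain ⟨σ, κ, _, _, red, hred⟩ := exists_frobenius (L := L) 97
  exact ⟨σ,
    apply_ne_self_of_forall_ne_zero (R.red_root_perm hred)
      (R.aeval_linearTrinomial_intCast (ZMod 97) red) (by decide +kernel),
    apply_ne_self_of_forall_ne_zero (S.red_root_perm hred)
      (S.aeval_linearTrinomial_intCast (ZMod 97) red) (by decide +kernel)⟩

theorem exists_perm_isCycle : ∃ σ : Gal(L/ℚ),
    ((R.perm σ).IsCycle ∧ ∃ z, ∀ i, R.perm σ i = i ↔ i = z) ∧ R.perm σ ^ 7 = 1 ∧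
      ((S.perm σ).IsCycle ∧ ∃ z, ∀ i, S.perm σ i = i ↔ i = z) ∧ S.perm σ ^ 11 = 1 := by
  obtain ⟨σ, κ, _, _, red, hred⟩ := exists_frobenius (L := L) 233
  have hR := R.aeval_linearTrinomial_intCast (ZMod 233) red
  have hS := S.aeval_linearTrinomial_intCast (ZMod 233) red
  have hRinj := R.comp_root_injective (k := ZMod 233) red (by decide +kernel) (by decide +kernel)
  have hSinj := S.comp_root_injective (k := ZMod 233) red (by decide +kernel) (by decide +kernel)
  have hR7 : ∀ a ∈ frobeniusSubX (linearTrinomialTail 6 ((-2139 : ℤ) : ZMod 233)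
      ((6489 : ℤ) : ZMod 233)) 7, a = 0 := by decide +kernel
  have hS11 : ∀ a ∈ frobeniusSubX (linearTrinomialTail 10
      ((gNumSqrt ^ 2 * gDenSqrt ^ 20 : ℤ) : ZMod 233)
      ((gNumSqrt ^ 2 * gDenSqrt ^ 22 : ℤ) : ZMod 233)) 11, a = 0 := by decide +kernel
  exact ⟨σ,
    isCycle_of_frobeniusSubX (R.red_root_perm hred) hR hRinj (by norm_num) rfl hR7 (c := 16)
      (by decide +kernel),
    pow_eq_one_of_frobeniusSubX (R.red_root_perm hred) hR hRinj hR7,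
    isCycle_of_frobeniusSubX (S.red_root_perm hred) hS hSinj (by norm_num) rfl hS11 (c := 159)
      (by decide +kernel),
    pow_eq_one_of_frobeniusSubX (S.red_root_perm hred) hS hSinj hS11⟩

theorem exists_perm_pow_isSwap : ∃ σ : Gal(L/ℚ),
    (R.perm σ ^ 3).IsSwap ∧ (S.perm σ ^ 9).IsSwap ∧
      ∀ i, (S.perm σ ^ 9) i ≠ i → ∀ y : L, y ^ 2 = S.root i → (σ ^ 18) y = -y := by
  obtain ⟨σ, κ, _, _, red, hred⟩ := exists_frobenius (L := L) 439
  have hR := R.aeval_linearTrinomial_intCast (ZMod 439) red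
  have hS := S.aeval_linearTrinomial_intCast (ZMod 439) red
  have hRinj := R.comp_root_injective (k := ZMod 439) red (by decide +kernel) (by decide +kernel)
  have hSinj := S.comp_root_injective (k := ZMod 439) red (by decide +kernel) (by decide +kernel)
  -- Modulo `439`, the trinomials have the irreducible factors `X² - 206X - 233` and
  -- `X² - 44X - 223`; the degrees of their other irreducible factors divide `3` and `9`.
  obtain ⟨hRswap, -⟩ := isSwap_of_frobeniusSubX (R.red_root_perm hred) hR hRinj (k := 3)
    (b' := -206) (e' := -233) (by decide +kernel) (by decide +kernel) (by decide +kernel)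
  obtain ⟨hSswap, hSfactor⟩ := isSwap_of_frobeniusSubX (S.red_root_perm hred) hS hSinj (k := 9)
    (b' := -44) (e' := -223) (by decide +kernel) (by decide +kernel) (by decide +kernel)
  refine ⟨σ, hRswap, hSswap, fun i hi y hy => ?_⟩
  obtain ⟨y, rfl⟩ : ∃ z : 𝓞 L, (z : L) = y := by
    have : IsIntegral ℤ (y ^ 2) := hy ▸ (S.root i).isIntegral_coe
    exact ⟨⟨y, this.of_pow two_pos⟩, rfl⟩
  replace hy : y ^ 2 = S.root i := RingOfIntegers.coe_injective hy
  have hfix : σ ^ 18 • y ^ 2 = y ^ 2 := by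
    have hone : S.perm (σ ^ 18) = 1 := by
      rw [map_pow, pow_mul (S.perm σ) 9 2, ← hSswap.orderOf, pow_orderOf_eq_one]
    rw [hy, ← S.root_perm, hone, Equiv.Perm.one_apply]
  have hneg : red (y ^ 2) ^ ((439 ^ 18 - 1) / 2) = -1 := by
    have hpow : powMod (linearTrinomialTail 0 (-44) (-223)) [0, 1] ((439 ^ 18 - 1) / 2) =
        ([-1, 0] : List (ZMod 439)) := by decide +kernel
    have h := pow_eq_aeval_powMod (hSfactor i hi) ((439 ^ 18 - 1) / 2)
    rw [hpow] at h
    simpa [ofCoeffs, hy] using h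
  have hchar : (2 : κ) ≠ 0 := by
    have htwo : (2 : ZMod 439) ≠ 0 := by decide
    simpa only [map_ofNat] using (map_ne_zero (algebraMap (ZMod 439) κ)).mpr htwo
  exact congrArg (algebraMap (𝓞 L) L)
    (pow_smul_eq_neg_of_pow_eq_neg_one (by decide) hchar hred hfix hneg)

end FrobeniusElements

/-! ## The Galois group of the splitting field -/

section GaloisAction

open NumberField

theorem gDenSqrt_ne_zero : gDenSqrt ≠ 0 := by decide

theorem rubikDisc_ne_zero : rubikDisc ≠ 0 := by decide

variable {L : Type*} [Field L]

section SquareRoots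

variable (S : RootLabelling L gTrinomial 12) {y : Fin 12 → L}
variable (hy : ∀ i, y i ^ 2 = S.root i)
include hy

theorem prod_sqrt_sq : (∏ i, y i) ^ 2 = ((gNumSqrt * gDenSqrt ^ 11 : ℤ) : L) ^ 2 := by
  have h := S.aeval_eq_prod (algebraMap (𝓞 L) L) 0
  rw [aeval_linearTrinomial] at h
  simp only [zero_sub, Finset.prod_neg, ← hy, Finset.prod_pow] at h
  norm_num at h ⊢
  linear_combination -h

variable [CharZero L]

theorem sq_apply_sqrt (s : Gal(L/ℚ)) (i : Fin 12) : s (y i) ^ 2 = y (S.perm s i) ^ 2 := by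
  rw [hy, S.coe_root_perm, ← hy, map_pow]

theorem sqrt_ne_zero (i : Fin 12) : y i ≠ 0 := by
  intro h
  have := S.aeval_root (algebraMap (𝓞 L) L) i
  rw [show algebraMap (𝓞 L) L (S.root i) = 0 by simp [← hy, h], aeval_linearTrinomial] at this
  norm_num [gNumSqrt, gDenSqrt] at this

theorem apply_prod_sqrt (s : Gal(L/ℚ)) : s (∏ i, y i) = ∏ i, y i := by
  rcases sq_eq_sq_iff_eq_or_eq_neg.mp (prod_sqrt_sq S hy) with h | h <;> simp [h]

end SquareRoots

variable [NumberField L] [IsGalois ℚ L]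
variable (R : RootLabelling L fTrinomial 8) (S : RootLabelling L gTrinomial 12)

include S in
theorem perm_fTrinomial_surjective : Function.Surjective R.perm := by
  obtain ⟨e, he, -⟩ := exists_perm_apply_ne_self R S
  obtain ⟨a, ⟨ha, hz⟩, -⟩ := exists_perm_isCycle R S
  obtain ⟨b, hb, -⟩ := exists_perm_pow_isSwap R S
  exact surjective_of_isCycle_of_isSwap ha hz he (map_pow R.perm b 3 ▸ hb)

include R in
theorem perm_gTrinomial_surjective : Function.Surjective S.perm := by
  obtain ⟨e, -, he⟩ := exists_perm_apply_ne_self R S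
  obtain ⟨a, -, -, ⟨ha, hz⟩, -⟩ := exists_perm_isCycle R S
  obtain ⟨b, -, hb, -⟩ := exists_perm_pow_isSwap R S
  exact surjective_of_isCycle_of_isSwap ha hz he (map_pow S.perm b 9 ▸ hb)

include R S in
theorem exists_apply_ne_self {x : L} (hx : x ^ 2 = rubikDisc) : ∃ s : Gal(L/ℚ), s x ≠ x := by
  obtain ⟨b, hb, -⟩ := exists_perm_pow_isSwap R S
  refine ⟨b ^ 3, fun h => ?_⟩
  have hsign := R.sign_perm_eq_one_of_apply_eq_self (by norm_num) rubikDisc_ne_zero (by norm_num)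
    linearTrinomialDisc_f hx h
  rw [map_pow, hb.sign_eq] at hsign
  exact absurd hsign (by decide)

variable {N : Subgroup Gal(L/ℚ)} [N.Normal] (hN : ∀ g : Gal(L/ℚ), g ^ 2 ∈ N)
include hN

theorem exists_mul_perm_eq_one {x : L} (hx : x ^ 2 = rubikDisc) {s : Gal(L/ℚ)} (hs : s x = x) :
    ∃ w ∈ N, R.perm (s * w) = 1 ∧ S.perm (s * w) = 1 := by
  obtain ⟨a, ⟨haR, -⟩, hR7, ⟨haS, -⟩, hS11⟩ := exists_perm_isCycle R S
  have h22 : a ^ 22 ∈ N := by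
    rw [pow_mul a 11 2]
    exact hN _
  have h56 : a ^ 56 ∈ N := by
    rw [pow_mul a 28 2]
    exact hN _
  have hR22 : R.perm (a ^ 22) = R.perm a := by
    rw [map_pow, pow_succ, pow_mul _ 7 3, hR7, one_pow, one_mul]
  have hR56 : R.perm (a ^ 56) = 1 := by rw [map_pow, pow_mul _ 7 8, hR7, one_pow]
  have hS22 : S.perm (a ^ 22) = 1 := by rw [map_pow, pow_mul _ 11 2, hS11, one_pow]
  have hS56 : S.perm (a ^ 56) = S.perm a := by
    rw [map_pow, pow_succ, pow_mul _ 11 5, hS11, one_pow, one_mul]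
  exact exists_mul_mem_ker_of_sign_eq_one (a := a ^ 22) (b := a ^ 56) (by simp) (by simp)
    (perm_fTrinomial_surjective R S) (perm_gTrinomial_surjective R S) N
    h22 hS22 (hR22 ▸ haR.ne_one) h56 hR56
    (hS56 ▸ haS.ne_one)
    (R.sign_perm_eq_one_of_apply_eq_self (by norm_num) rubikDisc_ne_zero (by norm_num)
      linearTrinomialDisc_f hx hs)
    (S.sign_perm_eq_one_of_apply_eq_self (by decide +kernel) rubikDisc_ne_zero (by decide +kernel)
      linearTrinomialDisc_g hx hs)

theorem exists_mul_apply_sqrt_eq_self {y : Fin 12 → L}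
    (hy : ∀ i, y i ^ 2 = S.root i) {s : Gal(L/ℚ)} (hsR : R.perm s = 1) (hsS : S.perm s = 1) :
    ∃ w ∈ N, R.perm (s * w) = 1 ∧ ∀ i, (s * w) (y i) = y i := by
  classical
  obtain ⟨b, hbR, hbS, hneg⟩ := exists_perm_pow_isSwap R S
  have hbN : b ^ 18 ∈ N := by
    rw [pow_mul b 9 2]
    exact hN _
  have hbR18 : R.perm (b ^ 18) = 1 := by
    rw [map_pow, pow_mul _ 3 6, pow_mul _ 2 3, ← hbR.orderOf, pow_orderOf_eq_one, one_pow]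
  have hbS18 : S.perm (b ^ 18) = 1 := by
    rw [map_pow, pow_mul _ 9 2, ← hbS.orderOf, pow_orderOf_eq_one]
  have hflips : flips y (b ^ 18) = (S.perm b ^ 9).support := by
    ext i
    rw [mem_flips, Equiv.Perm.mem_support]
    refine ⟨fun h hi => ?_, fun hi => hneg i hi _ (hy i)⟩
    have hfix : (b ^ 18) (y i) = y i := by
      rw [pow_mul b 9 2]
      exact sq_apply_eq_self_of_apply_sq_eq (by rw [sq_apply_sqrt S hy, map_pow, hi])
    exact sqrt_ne_zero S hy i (self_eq_neg.mp (hfix.symm.trans h))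
  obtain ⟨w, ⟨hwN, hwR : R.perm w = 1⟩, hw⟩ := exists_mul_apply_eq_self (N := N ⊓ R.perm.ker)
    (sqrt_ne_zero S hy) (sq_apply_sqrt S hy) (perm_gTrinomial_surjective R S) ⟨hbN, hbR18⟩ hbS18
    (hflips ▸ Equiv.Perm.card_support_eq_two.mpr hbS) hsS (apply_prod_sqrt S hy s)
  exact ⟨w, hwN, by rw [map_mul, hsR, hwR, one_mul], hw⟩

end GaloisAction

section SplittingField

variable {F E : Type*} [Field F] [Field E] [Algebra F E]

theorem splits_map_of_dvd_of_isSplittingField {P Q : F[X]} [IsSplittingField F E Q] (hQ : Q ≠ 0)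
    (h : P ∣ Q) : (P.map (algebraMap F E)).Splits :=
  (IsSplittingField.splits E Q).of_dvd (by simpa using hQ) (Polynomial.map_dvd _ h)

theorem eq_one_of_forall_aeval_eq_zero (P : F[X]) [IsSplittingField F E P] {u : Gal(E/F)}
    (hu : ∀ x, aeval x P = 0 → u x = x) : u = 1 := by
  have hext : (u : E →ₐ[F] E) = AlgHom.id F E :=
    AlgHom.ext_of_adjoin_eq_top (IsSplittingField.adjoin_rootSet E P)
      fun x hx => hu x (mem_rootSet.mp hx).2
  exact AlgEquiv.ext fun x => DFunLike.congr_fun hext x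

variable {L : Type*} [Field L] [CharZero L] [IsSplittingField ℚ L (fRubik * gRubik)]

variable (L) in
theorem fRubik_splits : (fRubik.map (algebraMap ℚ L)).Splits :=
  splits_map_of_dvd_of_isSplittingField (mul_ne_zero fRubik_ne_zero gRubik_ne_zero)
    (dvd_mul_right fRubik gRubik)

variable (L) in
theorem gRubik_splits : (gRubik.map (algebraMap ℚ L)).Splits :=
  splits_map_of_dvd_of_isSplittingField (mul_ne_zero fRubik_ne_zero gRubik_ne_zero)
    (dvd_mul_left gRubik fRubik)

variable (R : RootLabelling L fTrinomial 8) (S : RootLabelling L gTrinomial 12)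
variable {y : Fin 12 → L} (hy : ∀ i, y i ^ 2 = S.root i)
include hy

theorem pow_three_eq_one_of_fixes {u : Gal(L/ℚ)} (hR : R.perm u = 1) (hu : ∀ i, u (y i) = y i) :
    u ^ 3 = 1 := by
  refine eq_one_of_forall_aeval_eq_zero (fRubik * gRubik) fun x hx => ?_
  rw [map_mul, mul_eq_zero] at hx
  rcases hx with hx | hx
  · obtain ⟨i, hi⟩ := R.exists_coe_root_eq (aeval_mobiusQuotient_fTrinomial hx)
    refine pow_three_apply_eq_self (ne_zero_of_aeval_fRubik hx) (ne_one_of_aeval_fRubik hx) ?_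
    rw [← hi, ← R.coe_root_perm, hR, Equiv.Perm.one_apply]
  · have hden : (gDenSqrt : L) ≠ 0 := by exact_mod_cast gDenSqrt_ne_zero
    obtain ⟨i, hi⟩ := S.exists_coe_root_eq ((aeval_gRubik x).symm.trans (by rw [hx, mul_zero]))
    have hux : u (gDenSqrt * x) = gDenSqrt * x := by
      rcases sq_eq_sq_iff_eq_or_eq_neg.mp (hi.symm.trans (hy i).symm) with h | h <;> simp [h, hu]
    have hfix : u x = x := by
      rw [map_mul, map_intCast] at hux
      exact mul_left_cancel₀ hden hux
    simp only [pow_succ, pow_zero, one_mul, AlgEquiv.mul_apply, hfix]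

end SplittingField

/-! ## Quadratic subfields -/

section QuadraticSubfield

open NumberField

theorem mem_of_apply_eq_self_of_sq_mem {L : Type*} [Field L] [NumberField L] [IsGalois ℚ L]
    [IsSplittingField ℚ L (fRubik * gRubik)] (R : RootLabelling L fTrinomial 8)
    (S : RootLabelling L gTrinomial 12) {x : L} (hx : x ^ 2 = rubikDisc)
    {N : Subgroup Gal(L/ℚ)} [N.Normal] (hN : ∀ g : Gal(L/ℚ), g ^ 2 ∈ N) {s : Gal(L/ℚ)}
    (hs : s x = x) : s ∈ N := by
  choose y hy using fun i => exists_sq_eq_of_gTrinomial (gRubik_splits L)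
    (S.aeval_root (algebraMap (𝓞 L) L) i)
  obtain ⟨w, hwN, hwR, hwS⟩ := exists_mul_perm_eq_one R S hN hx hs
  obtain ⟨v, hvN, hvR, hvy⟩ := exists_mul_apply_sqrt_eq_self R S hN hy hwR hwS
  have hcube : (s * w * v) ^ 3 = 1 := pow_three_eq_one_of_fixes R S hy hvR hvy
  have hmem : s * w * v ∈ N := by
    have hsq : s * w * v = ((s * w * v) ^ 2) ^ 2 := by
      rw [← pow_mul, pow_succ _ 3, hcube, one_mul]
    rw [hsq]
    exact hN _
  exact (N.mul_mem_cancel_right hwN).mp ((N.mul_mem_cancel_right hvN).mp hmem)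

open IntermediateField

variable {F E : Type*} [Field F] [Field E] [Algebra F E]

theorem finrank_adjoin_simple_eq_two {x : E} {d : F} (hx : x ^ 2 = algebraMap F E d)
    (hmem : x ∉ (algebraMap F E).range) : Module.finrank F F⟮x⟯ = 2 := by
  have hroot : aeval x (X ^ 2 - C d) = 0 := by simp [hx]
  have hint : IsIntegral F x := ⟨_, monic_X_pow_sub_C d two_ne_zero, hroot⟩
  rw [adjoin.finrank hint]
  refine le_antisymm ?_ ((minpoly.two_le_natDegree_iff hint).mpr hmem)
  simpa using natDegree_le_of_dvd (minpoly.dvd F x hroot) (X_pow_sub_C_ne_zero two_pos d)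

theorem finrank_eq_two_iff_eq_adjoin [FiniteDimensional F E] [IsGalois F E] {x : E} {d : F}
    (hx : x ^ 2 = algebraMap F E d) (hmoved : ∃ s : Gal(E/F), s x ≠ x)
    (hN : ∀ N : Subgroup Gal(E/F), N.index = 2 → ∀ s : Gal(E/F), s x = x → s ∈ N)
    (K : IntermediateField F E) : Module.finrank F K = 2 ↔ K = F⟮x⟯ := by
  have hfin : Module.finrank F F⟮x⟯ = 2 := finrank_adjoin_simple_eq_two hx <| by
    rintro ⟨q, rfl⟩
    obtain ⟨s, hs⟩ := hmoved
    exact hs (s.commutes q)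
  refine ⟨fun hK => ?_, fun hK => hK ▸ hfin⟩
  have hindex : K.fixingSubgroup.index = 2 := by rw [← finrank_eq_fixingSubgroup_index, hK]
  have hle : F⟮x⟯.fixingSubgroup ≤ K.fixingSubgroup := fun s hs =>
    hN K.fixingSubgroup hindex s (hs ⟨x, mem_adjoin_simple_self F x⟩)
  refine eq_of_le_of_finrank_eq ?_ (hK.trans hfin.symm)
  simpa only [IsGalois.fixedField_fixingSubgroup] using fixedField_antitone hle

end QuadraticSubfield

/-- The splitting field `L` of `f · g` over `ℚ` contains a unique subfield of degree `2`
over `ℚ`, namely `ℚ(√(7 · 1437417619559484462138047))`. -/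
theorem unique_quadratic_subfield :
    ∃ x : (fRubik * gRubik).SplittingField,
      x ^ 2 = algebraMap ℚ _ (7 * 1437417619559484462138047) ∧
      ∀ K : IntermediateField ℚ (fRubik * gRubik).SplittingField,
        Module.finrank ℚ ↥K = 2 ↔ K = IntermediateField.adjoin ℚ {x} := by
  let L := (fRubik * gRubik).SplittingField
  have : IsSplittingField ℚ L (fRubik * gRubik) := IsSplittingField.splittingField _
  have : CharZero L := algebraRat.charZero L
  have : NumberField L :=
    { to_finiteDimensional := IsSplittingField.finiteDimensional L (fRubik * gRubik) }
  have : IsGalois ℚ L := { to_normal := Normal.of_isSplittingField (fRubik * gRubik) }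
  obtain ⟨R⟩ := RootLabelling.nonempty_of_splits (by norm_num)
    (by rw [linearTrinomialDisc_f]; decide) (fTrinomial_splits (fRubik_splits L))
  obtain ⟨S⟩ := RootLabelling.nonempty_of_splits (by decide +kernel)
    (by rw [linearTrinomialDisc_g]; decide +kernel) (gTrinomial_splits (gRubik_splits L))
  obtain ⟨x, hx⟩ := R.exists_sq_eq_of_disc_eq (by norm_num) (by norm_num) linearTrinomialDisc_f
  have hx' : x ^ 2 = algebraMap ℚ L (7 * 1437417619559484462138047) := by
    norm_num [hx, rubikDisc]
  refine ⟨x, hx', finrank_eq_two_iff_eq_adjoin hx' (exists_apply_ne_self R S hx) ?_⟩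
  intro N hindex s hs
  have := Subgroup.normal_of_index_eq_two hindex
  exact mem_of_apply_eq_self_of_sq_mem R S hx (Subgroup.sq_mem_of_index_two hindex) hs
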